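/- Let (A,⋆) be a ⋆-ring, l ∈ A^× a unit with l⋆ = l⁻¹, and λ ∈ A such that λ, λ⋆ is a regular sequence on A (i.e. λ is not a zero divisor in A and the image of λ⋆ is not a zero divisor in A/Aλ). Then the ideal 𝔞 := A·λ + A·λ⋆ is stable under the twisted involution ⋆_l, and multiplication by the product λ·λ⋆ induces isomorphisms h⁺(A,⋆_l) → h⁺(𝔞, ⋆_l) and h⁻(A,⋆_l) → h⁻(𝔞, ⋆_l), where 𝔞 carries the involution obtained by restricting ⋆_l. -/

import Mathlib

def kerP {M : Type*} [AddCommGroup M] (f : M →+ M) : AddSubgroup M :=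
  (AddMonoidHom.id M - f).ker

def kerM {M : Type*} [AddCommGroup M] (f : M →+ M) : AddSubgroup M :=
  (AddMonoidHom.id M + f).ker

def imP {M : Type*} [AddCommGroup M] (f : M →+ M) : AddSubgroup M :=
  (AddMonoidHom.id M + f).range

def imM {M : Type*} [AddCommGroup M] (f : M →+ M) : AddSubgroup M :=
  (AddMonoidHom.id M - f).range

abbrev hPlus {M : Type*} [AddCommGroup M] (f : M →+ M) :=
  kerP f ⧸ (imP f).addSubgroupOf (kerP f)

abbrev hMinus {M : Type*} [AddCommGroup M] (f : M →+ M) :=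
  kerM f ⧸ (imM f).addSubgroupOf (kerM f)

def hPlusMk {M : Type*} [AddCommGroup M] (f : M →+ M) (x : M) (hx : x ∈ kerP f) :
    hPlus f := QuotientAddGroup.mk ⟨x, hx⟩

def hMinusMk {M : Type*} [AddCommGroup M] (f : M →+ M) (x : M) (hx : x ∈ kerM f) :
    hMinus f := QuotientAddGroup.mk ⟨x, hx⟩

/-- The `l`-twisted involution `a ↦ a⋆ · l` on a `⋆`-ring `A`. -/
def twistL {A : Type*} [CommRing A] (σ : A →+* A) (l : A) : A →+ A :=
  (AddMonoidHom.mulRight l).comp σ.toAddMonoidHom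

/-
The map `(x, y) ↦ λx + λ⋆y` presents `𝔞` as the quotient of `A ⊕ A`, on which the involution swaps
the two summands (up to `⋆_l`) so that all Tate cohomology vanishes, by the Koszul relations
`c ↦ (-λ⋆c, λc)`, a copy of `A` with the negated involution. The connecting map therefore
identifies `h^±(𝔞)` with `h^∓(A, -⋆_l) = h^±(A, ⋆_l)`, and up to sign its inverse is multiplication
by `λλ⋆`. Carried out on elements, the argument only sees `λ` and `λ⋆` as commuting additive
endomorphisms `p` and `q` exchanged by the involution; passing from `h⁺` to `h⁻` amounts to
replacing the involution by its negative.
-/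

section TateCohomology

variable {M N : Type*} [AddCommGroup M] [AddCommGroup N]

theorem mem_kerP {f : M →+ M} {x : M} : x ∈ kerP f ↔ f x = x := by
  rw [eq_comm, ← sub_eq_zero]
  rfl

theorem mem_imP {f : M →+ M} {x : M} : x ∈ imP f ↔ ∃ v, v + f v = x :=
  Iff.rfl

theorem kerP_neg (f : M →+ M) : kerP (-f) = kerM f := by
  rw [kerP, kerM, sub_neg_eq_add]

theorem imP_neg (f : M →+ M) : imP (-f) = imM f := by
  rw [imP, imM, sub_eq_add_neg]

/-- The identification of `h⁻(M, f)` with `h⁺(M, -f)`, which is the identity on representatives. -/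
def hMinusEquivHPlusNeg (f : M →+ M) : hMinus f ≃+ hPlus (-f) :=
  QuotientAddGroup.congr _ _ (AddEquiv.addSubgroupCongr (kerP_neg f).symm) <| by
    rw [AddSubgroup.map_equiv_eq_comap_symm, imP_neg]
    rfl

theorem hMinusEquivHPlusNeg_mk (f : M →+ M) (x : M) (hx : x ∈ kerM f) :
    hMinusEquivHPlusNeg f (hMinusMk f x hx) = hPlusMk (-f) x ((kerP_neg f).symm ▸ hx) :=
  rfl

variable {f : M →+ M} {g : N →+ N}

theorem map_mem_kerP {φ : M →+ N} (hφ : Function.Semiconj φ f g) {x : M} (hx : x ∈ kerP f) :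
    φ x ∈ kerP g := by
  rw [mem_kerP, ← hφ x, mem_kerP.1 hx]

theorem map_mem_imP {φ : M →+ N} (hφ : Function.Semiconj φ f g) {x : M} (hx : x ∈ imP f) :
    φ x ∈ imP g := by
  obtain ⟨v, rfl⟩ := mem_imP.1 hx
  exact mem_imP.2 ⟨φ v, by rw [map_add, hφ v]⟩

/-- The homomorphism `h⁺(M, f) → h⁺(N, g)` induced by an additive map intertwining `f` and `g`. -/
def hPlusMap (φ : M →+ N) (hφ : Function.Semiconj φ f g) : hPlus f →+ hPlus g :=
  QuotientAddGroup.map _ _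
    ((φ.comp (kerP f).subtype).codRestrict (kerP g) fun x => map_mem_kerP hφ x.2)
    fun _ hx => map_mem_imP hφ hx

theorem hPlusMap_mk (φ : M →+ N) (hφ : Function.Semiconj φ f g) (x : M) (hx : x ∈ kerP f) :
    hPlusMap φ hφ (hPlusMk f x hx) = hPlusMk g (φ x) (map_mem_kerP hφ hx) :=
  rfl

theorem hPlusMk_eq_zero_iff {x : M} (hx : x ∈ kerP f) : hPlusMk f x hx = 0 ↔ x ∈ imP f :=
  QuotientAddGroup.eq_zero_iff _

theorem hPlusMk_eq_iff {x y : M} (hx : x ∈ kerP f) (hy : y ∈ kerP f) :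
    hPlusMk f x hx = hPlusMk f y hy ↔ y - x ∈ imP f := by
  rw [← neg_add_eq_sub]
  exact QuotientAddGroup.eq

theorem hPlusMap_bijective {φ : M →+ N} (hφ : Function.Semiconj φ f g)
    (hinj : ∀ x ∈ kerP f, φ x ∈ imP g → x ∈ imP f)
    (hsurj : ∀ y ∈ kerP g, ∃ x ∈ kerP f, y - φ x ∈ imP g) :
    Function.Bijective (hPlusMap φ hφ) := by
  constructor
  · rw [injective_iff_map_eq_zero]
    rintro ⟨x, hx⟩ hzero
    exact (hPlusMk_eq_zero_iff hx).2
      (hinj x hx ((hPlusMk_eq_zero_iff (map_mem_kerP hφ hx)).1 hzero))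
  · rintro ⟨y, hy⟩
    obtain ⟨x, hx, hyx⟩ := hsurj y hy
    exact ⟨hPlusMk f x hx, (hPlusMk_eq_iff (map_mem_kerP hφ hx) hy).2 hyx⟩

end TateCohomology

theorem exists_addMonoidHom_lift_of_injective {M N P : Type*} [AddGroup M] [AddGroup N]
    [AddGroup P] {ι : N →+ P} (hι : Function.Injective ι) {g : M →+ P} (hg : g.range ≤ ι.range) :
    ∃ φ : M →+ N, ∀ x, ι (φ x) = g x :=
  ⟨(AddMonoidHom.ofInjective hι).symm.toAddMonoidHom.comp
    (g.codRestrict ι.range fun x => hg ⟨x, rfl⟩), fun _ =>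
    AddMonoidHom.apply_ofInjective_symm hι _⟩

/-- An additive involution `f` together with commuting endomorphisms `p` and `q` that it exchanges,
such that `p, q` is a regular sequence on `M`. The model case is `p = λ`, `q = λ⋆` acting by
multiplication on a `⋆`-ring with a twisted involution `f`. -/
structure IsRegularConjugatePair {M : Type*} [AddCommGroup M] (f p q : M →+ M) : Prop where
  involutive : Function.Involutive f
  commute : Function.Commute p q
  semiconj : Function.Semiconj f p q
  injective : Function.Injective p
  mem_range_of_mem_range : ∀ x, q x ∈ p.range → x ∈ p.range

namespace IsRegularConjugatePair

variable {M : Type*} [AddCommGroup M] {f p q : M →+ M}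

theorem neg (h : IsRegularConjugatePair f p q) : IsRegularConjugatePair (-f) p q where
  involutive x := by simp only [AddMonoidHom.neg_apply, map_neg, neg_neg, h.involutive x]
  commute := h.commute
  semiconj x := by simp only [AddMonoidHom.neg_apply, map_neg, h.semiconj x]
  injective := h.injective
  mem_range_of_mem_range := h.mem_range_of_mem_range

theorem semiconj_symm (h : IsRegularConjugatePair f p q) : Function.Semiconj f q p := fun x => by
  rw [← h.involutive (p (f x)), h.semiconj, h.involutive]

theorem injective_right (h : IsRegularConjugatePair f p q) : Function.Injective q := fun x y hxy =>
  h.involutive.injective <| h.injective <| by rw [← h.semiconj_symm, hxy, h.semiconj_symm]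

theorem apply_comp (h : IsRegularConjugatePair f p q) (x : M) : f (p (q x)) = p (q (f x)) := by
  rw [h.semiconj, h.semiconj_symm, h.commute]

theorem map_mem_sup (h : IsRegularConjugatePair f p q) {z : M} (hz : z ∈ p.range ⊔ q.range) :
    f z ∈ p.range ⊔ q.range := by
  obtain ⟨_, ⟨x, rfl⟩, _, ⟨y, rfl⟩, rfl⟩ := AddSubgroup.mem_sup.1 hz
  rw [map_add, h.semiconj, h.semiconj_symm, add_comm]
  exact AddSubgroup.add_mem_sup ⟨f y, rfl⟩ ⟨f x, rfl⟩

theorem exists_eq_apply_of_apply_eq (h : IsRegularConjugatePair f p q) {x y : M} (hxy : q y = p x) :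
    ∃ c, y = p c ∧ x = q c := by
  obtain ⟨c, rfl⟩ := h.mem_range_of_mem_range y ⟨x, hxy.symm⟩
  exact ⟨c, rfl, h.injective (by rw [← hxy, h.commute])⟩

theorem mem_imP_of_add_apply_eq (h : IsRegularConjugatePair f p q) {a w : M}
    (hw : w ∈ p.range ⊔ q.range) (hwa : w + f w = p (q a)) : a ∈ imP f := by
  obtain ⟨_, ⟨x, rfl⟩, _, ⟨y, rfl⟩, rfl⟩ := AddSubgroup.mem_sup.1 hw
  rw [map_add, h.semiconj, h.semiconj_symm] at hwa
  have hkoszul : q (y + f x) = p (q a - (x + f y)) := by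
    simp only [map_add, map_sub, ← hwa]
    abel
  obtain ⟨v, hv, hav⟩ := h.exists_eq_apply_of_apply_eq hkoszul
  have hfv : x + f y = q (f v) := by
    rw [← h.semiconj, ← hv, map_add, h.involutive, add_comm]
  refine mem_imP.2 ⟨v, h.injective_right ?_⟩
  rw [map_add, ← hav, ← hfv, sub_add_cancel]

theorem exists_fixed_sub_eq_add_apply (h : IsRegularConjugatePair f p q) {z : M}
    (hz : z ∈ p.range ⊔ q.range) (hfz : f z = z) :
    ∃ c, f c = c ∧ ∃ w ∈ p.range ⊔ q.range, w + f w = z - p (q c) := by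
  obtain ⟨_, ⟨x, rfl⟩, _, ⟨y, rfl⟩, rfl⟩ := AddSubgroup.mem_sup.1 hz
  rw [map_add, h.semiconj, h.semiconj_symm] at hfz
  have hkoszul : q (f x - y) = p (x - f y) := by
    rw [map_sub, map_sub, sub_eq_sub_iff_add_eq_add, hfz]
  obtain ⟨c, hpc, hqc⟩ := h.exists_eq_apply_of_apply_eq hkoszul
  have hfc : f c = c := h.injective_right <| by
    rw [← h.semiconj, ← hpc, map_sub, h.involutive, hqc]
  refine ⟨c, hfc, q y, AddSubgroup.mem_sup_right ⟨y, rfl⟩, ?_⟩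
  rw [h.semiconj_symm, ← hqc, map_sub]
  abel

variable {N : Type*} [AddCommGroup N] {τ : N →+ N} {ι : N →+ M}

theorem exists_hPlus_equiv (h : IsRegularConjugatePair f p q) (hι : Function.Injective ι)
    (hrange : ι.range = p.range ⊔ q.range) (hτ : Function.Semiconj ι τ f) :
    ∃ e : hPlus f ≃+ hPlus τ, ∀ a ha b hb, ι b = p (q a) →
      e (hPlusMk f a ha) = hPlusMk τ b hb := by
  obtain ⟨φ, hφ⟩ : ∃ φ : M →+ N, ∀ x, ι (φ x) = p (q x) :=
    exists_addMonoidHom_lift_of_injective hι (g := p.comp q) <| by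
      rintro _ ⟨x, rfl⟩
      exact hrange ▸ AddSubgroup.mem_sup_left ⟨q x, rfl⟩
  have hφf : Function.Semiconj φ f τ := fun x =>
    hι (by rw [hφ, hτ, hφ, h.apply_comp])
  have hmem (y : N) : ι y ∈ p.range ⊔ q.range := hrange ▸ ⟨y, rfl⟩
  have hbij : Function.Bijective (hPlusMap φ hφf) := by
    refine hPlusMap_bijective hφf (fun x _ hx => ?_) (fun y hy => ?_)
    · obtain ⟨w, hw⟩ := mem_imP.1 hx
      exact h.mem_imP_of_add_apply_eq (hmem w) (by rw [← hτ, ← map_add, hw, hφ])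
    · obtain ⟨c, hc, w, hw, hwc⟩ :=
        h.exists_fixed_sub_eq_add_apply (hmem y) (by rw [← hτ, mem_kerP.1 hy])
      obtain ⟨v, rfl⟩ : w ∈ ι.range := hrange ▸ hw
      exact ⟨c, mem_kerP.2 hc, mem_imP.2 ⟨v, hι (by rw [map_add, hτ, hwc, map_sub, hφ])⟩⟩
  refine ⟨AddEquiv.ofBijective _ hbij, fun a ha b hb hab => ?_⟩
  obtain rfl : φ a = b := hι (by rw [hφ, hab])
  exact hPlusMap_mk φ hφf a ha

theorem exists_hMinus_equiv (h : IsRegularConjugatePair f p q) (hι : Function.Injective ι)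
    (hrange : ι.range = p.range ⊔ q.range) (hτ : Function.Semiconj ι τ f) :
    ∃ e : hMinus f ≃+ hMinus τ, ∀ a ha b hb, ι b = p (q a) →
      e (hMinusMk f a ha) = hMinusMk τ b hb := by
  have hτ_neg : Function.Semiconj ι ⇑(-τ) ⇑(-f) := fun x => by
    simp only [AddMonoidHom.neg_apply, map_neg, hτ x]
  obtain ⟨e, he⟩ := h.neg.exists_hPlus_equiv hι hrange hτ_neg
  refine ⟨((hMinusEquivHPlusNeg f).trans e).trans (hMinusEquivHPlusNeg τ).symm,
    fun a ha b hb hab => ?_⟩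
  rw [AddEquiv.trans_apply, AddEquiv.trans_apply, AddEquiv.symm_apply_eq,
    hMinusEquivHPlusNeg_mk, hMinusEquivHPlusNeg_mk, he _ _ _ _ hab]

end IsRegularConjugatePair

theorem statement13_general {M : Type*} [AddCommGroup M] {f p q : M →+ M}
    (h : IsRegularConjugatePair f p q) :
    (∀ z ∈ p.range ⊔ q.range, f z ∈ p.range ⊔ q.range) ∧
    ∀ {N : Type*} [AddCommGroup N] (τ : N →+ N) (ι : N →+ M), Function.Injective ι →
      ι.range = p.range ⊔ q.range → Function.Semiconj ι τ f →
      (∃ e : hPlus f ≃+ hPlus τ, ∀ a ha b hb, ι b = p (q a) →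
        e (hPlusMk f a ha) = hPlusMk τ b hb) ∧
      (∃ e : hMinus f ≃+ hMinus τ, ∀ a ha b hb, ι b = p (q a) →
        e (hMinusMk f a ha) = hMinusMk τ b hb) :=
  ⟨fun _ => h.map_mem_sup, fun _ _ hι hrange hτ =>
    ⟨h.exists_hPlus_equiv hι hrange hτ, h.exists_hMinus_equiv hι hrange hτ⟩⟩

section StarRing

variable {A : Type*} [CommRing A]

theorem toAddSubgroup_span_pair (a b : A) :
    (Ideal.span {a, b}).toAddSubgroup =
      (AddMonoidHom.mulLeft a).range ⊔ (AddMonoidHom.mulLeft b).range := by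
  ext z
  simp [Ideal.mem_span_pair, AddSubgroup.mem_sup, mul_comm]

theorem isRegularConjugatePair_twistL {σ : A →+* A} (hσ : Function.Involutive σ) {l : A}
    (hl : σ l * l = 1) {lam : A} (hreg1 : ∀ a, lam * a = 0 → a = 0)
    (hreg2 : ∀ a, σ lam * a ∈ Ideal.span {lam} → a ∈ Ideal.span {lam}) :
    IsRegularConjugatePair (twistL σ l) (AddMonoidHom.mulLeft lam)
      (AddMonoidHom.mulLeft (σ lam)) where
  involutive a := by
    change σ (σ a * l) * l = a
    rw [map_mul, hσ, mul_assoc, hl, mul_one]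
  commute a := mul_left_comm _ _ _
  semiconj a := by
    change σ (lam * a) * l = σ lam * (σ a * l)
    rw [map_mul, mul_assoc]
  injective := (injective_iff_map_eq_zero _).2 hreg1
  mem_range_of_mem_range a := by
    simpa [Ideal.mem_span_singleton, Dvd.dvd, eq_comm] using hreg2 a

end StarRing

/-- Let `(A,⋆)` be a `⋆`-ring, `l ∈ A^×` a unit with `l⋆ = l⁻¹`, and
`λ ∈ A` such that `λ, λ⋆` is a regular sequence on `A`.  Then the ideal `𝔞 = Aλ + Aλ⋆` is
stable under the twisted involution `⋆_l`, and multiplication by `λ·λ⋆` induces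
isomorphisms `h⁺(A,⋆_l) → h⁺(𝔞,⋆_l)` and `h⁻(A,⋆_l) → h⁻(𝔞,⋆_l)`, where `𝔞` carries the
restriction of `⋆_l`. -/
theorem statement13
    {A : Type*} [CommRing A] (σ : A →+* A) (hσ : ∀ a, σ (σ a) = a)
    (l : Aˣ) (hl : σ l = ((l⁻¹ : Aˣ) : A))
    (lam : A)
    (hreg1 : ∀ a : A, lam * a = 0 → a = 0)
    (hreg2 : ∀ a : A, σ lam * a ∈ (Ideal.span {lam} : Ideal A) →
      a ∈ (Ideal.span {lam} : Ideal A)) :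
    (∀ a ∈ (Ideal.span {lam, σ lam} : Ideal A),
        σ a * l ∈ (Ideal.span {lam, σ lam} : Ideal A)) ∧
    ∀ τ : ↥(Ideal.span {lam, σ lam} : Ideal A) →+ ↥(Ideal.span {lam, σ lam} : Ideal A),
      (∀ y : ↥(Ideal.span {lam, σ lam} : Ideal A), ((τ y : A)) = σ (y : A) * l) →
      (∃ e : hPlus (twistL σ (l : A)) ≃+ hPlus τ,
        ∀ (a : A) (ha : a ∈ kerP (twistL σ (l : A)))
          (hmem : lam * σ lam * a ∈ (Ideal.span {lam, σ lam} : Ideal A))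
          (hb : (⟨lam * σ lam * a, hmem⟩ : ↥(Ideal.span {lam, σ lam} : Ideal A)) ∈ kerP τ),
          e (hPlusMk (twistL σ (l : A)) a ha) = hPlusMk τ ⟨lam * σ lam * a, hmem⟩ hb) ∧
      (∃ e : hMinus (twistL σ (l : A)) ≃+ hMinus τ,
        ∀ (a : A) (ha : a ∈ kerM (twistL σ (l : A)))
          (hmem : lam * σ lam * a ∈ (Ideal.span {lam, σ lam} : Ideal A))
          (hb : (⟨lam * σ lam * a, hmem⟩ : ↥(Ideal.span {lam, σ lam} : Ideal A)) ∈ kerM τ),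
          e (hMinusMk (twistL σ (l : A)) a ha) = hMinusMk τ ⟨lam * σ lam * a, hmem⟩ hb) := by
  have h := isRegularConjugatePair_twistL hσ (by rw [hl, l.inv_mul]) hreg1 hreg2
  obtain ⟨hstable, hiso⟩ := statement13_general h
  simp only [← toAddSubgroup_span_pair] at hstable hiso
  refine ⟨hstable, fun τ hτ => ?_⟩
  obtain ⟨⟨ePlus, hePlus⟩, eMinus, heMinus⟩ := hiso τ (Submodule.subtype _).toAddMonoidHom
    Subtype.val_injective (AddSubgroup.range_subtype (Ideal.span {lam, σ lam}).toAddSubgroup) hτ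
  exact ⟨⟨ePlus, fun a ha _ hb => hePlus a ha _ hb (mul_assoc _ _ _)⟩,
    eMinus, fun a ha _ hb => heMinus a ha _ hb (mul_assoc _ _ _)⟩
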